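/- Nonlocal Ehrling inequality: Let n ∈ ℕ, R ≥ 1 and 0 < η ≤ 1/R. Let J_η be a kernel on ℝⁿ satisfying the scaling J_η(x) = η^{-n-2} J_1(x/η), with J_1 ∈ L¹(ℝⁿ) nonnegative, even, supported in (-π,π)ⁿ, and with second-moment matrix the identity. Define for u ∈ L²(𝕋ⁿ) the bilinear form E_η(u) := (1/4)∫_{𝕋ⁿ}∫_{𝕋ⁿ} J̃_η(x−y)|u(x)−u(y)|² dy dx, where J̃_η is the 2π-periodic extension of J_η. Then there is a constant C > 0 independent of R, η, u such that ‖u‖²_{L²(𝕋ⁿ)} ≤ (C/R²) E_η(u) + C R² ‖u‖²_{H^{-1}(𝕋ⁿ)} for all u ∈ L²(𝕋ⁿ). -/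

import Mathlib

/-!
# Nonlocal Ehrling inequality

On the Fourier side the nonlocal energy is a multiplier: up to powers of `2π`, the frequency
`k ∈ ℤⁿ` enters `E_η(u)` with weight `η⁻² φ(ηk)`, where `φ(ξ) = ∫ J₁(z) (1 - cos (ξ·z)) dz`
(`symb`). By Parseval it therefore suffices to show, for every `k`,
`1 ≤ (A / R²) η⁻² φ(ηk) + 2 R² / (1 + |k|²)` (`multiplier_bound`).

If `|k| ≤ R`, the last term is at least `1`, because `R ≥ 1`. If `|k| ≥ R`, one needs
`φ(ηk) ≥ d η² R²`. For `∑ |ξ_i| ≤ 1`, the bound `1 - cos t ≥ (2/π²) t²` on `[-π, π]` and the moment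
condition give `φ(ξ) ≥ (2/π²) |ξ|²` (`symb_low`). For `∑ |ξ_i| ≥ 1`, `φ` is bounded below by a
positive constant (`symb_high`), since it is continuous, positive away from the origin (the
hyperplanes `ξ·z ∈ 2πℤ` are null sets) and tends to `∫ J₁ > 0` at infinity by the Riemann–Lebesgue
lemma; here `η² R² ≤ 1` finishes the estimate.

Of the Fourier representation of the energy only a lower bound on finite sets of frequencies is
needed (`energy_lower`): after substituting `y = x - c` and exchanging the integrals, it is Bessel's
inequality for the translation differences `u - u(· - c)`, integrated against the kernel. These
computations take place on Mathlib's torus `(ℝ/ℤ)ⁿ`, to which functions on the box are pulled back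
along the section `sec`.
-/

open MeasureTheory Real

noncomputable section

/-- The fundamental cell [−π,π]ⁿ of the torus 𝕋ⁿ. -/
def Box (n : ℕ) : Set (Fin n → ℝ) := Set.univ.pi fun _ => Set.Icc (-π) π

/-- 2π-periodicity in each coordinate direction. -/
def TPeriodic {n : ℕ} (u : (Fin n → ℝ) → ℝ) : Prop :=
  ∀ (x : Fin n → ℝ) (m : Fin n → ℤ), u (x + fun i => 2 * π * (m i)) = u x

/-- Fourier coefficient û(k) = ∫_{𝕋ⁿ} e^{-i k·x} u(x) dx of a periodic function. -/
def fcoef {n : ℕ} (u : (Fin n → ℝ) → ℝ) (k : Fin n → ℤ) : ℂ :=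
  ∫ x in Box n, Complex.exp (-(Complex.I * ((∑ i, (k i : ℝ) * x i : ℝ) : ℂ))) * (u x : ℂ)

/-! ### Lower bounds for the symbol -/

/-- The symbol `ξ ↦ ∫ J(z) (1 - cos (ξ·z)) dz` of the nonlocal energy. -/
def symb {n : ℕ} (J : (Fin n → ℝ) → ℝ) (ξ : Fin n → ℝ) : ℝ :=
  ∫ z, J z * (1 - cos (∑ i, ξ i * z i))

lemma symb_integrable {n : ℕ} {J : (Fin n → ℝ) → ℝ} (hJ : Integrable J) (ξ : Fin n → ℝ) :
    Integrable fun z => J z * (1 - cos (∑ i, ξ i * z i)) := by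
  refine hJ.mul_bdd (c := 2) (by fun_prop : Continuous fun z : Fin n → ℝ =>
    1 - cos (∑ i, ξ i * z i)).aestronglyMeasurable (Filter.Eventually.of_forall fun z => ?_)
  rw [Real.norm_eq_abs, abs_le]
  constructor <;> linarith [neg_one_le_cos (∑ i, ξ i * z i), cos_le_one (∑ i, ξ i * z i)]

lemma symb_nonneg {n : ℕ} {J : (Fin n → ℝ) → ℝ} (hpos : ∀ x, 0 ≤ J x) (ξ : Fin n → ℝ) :
    0 ≤ symb J ξ :=
  integral_nonneg fun z => mul_nonneg (hpos z) (by simpa using cos_le_one _)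

/-- Quadratic lower bound near the origin. The restriction on `ξ` keeps `ξ·z` in `[-π, π]` on the
support of `J`, where `1 - cos t ≥ (2/π²) t²`; the second moments then evaluate the integral. -/
lemma symb_low {n : ℕ} {J : (Fin n → ℝ) → ℝ} (hJ : Integrable J) (hpos : ∀ x, 0 ≤ J x)
    (hsupp : Function.support J ⊆ Set.univ.pi fun _ => Set.Ioo (-π) π)
    (hmomint : ∀ k j : Fin n, Integrable fun x : Fin n → ℝ => J x * x k * x j)
    (hmom : ∀ k j : Fin n,
      (∫ x : Fin n → ℝ, J x * x k * x j) = if k = j then (1 : ℝ) else 0)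
    (ξ : Fin n → ℝ) (hξ : ∑ i, |ξ i| ≤ 1) :
    2 / π ^ 2 * ∑ i, ξ i ^ 2 ≤ symb J ξ := by
  have hexp : ∀ z : Fin n → ℝ, J z * (∑ i, ξ i * z i) ^ 2
      = ∑ k, ∑ j, ξ k * ξ j * (J z * z k * z j) := by
    intro z
    rw [sq, Finset.sum_mul_sum, Finset.mul_sum]
    refine Finset.sum_congr rfl fun k _ => ?_
    rw [Finset.mul_sum]
    exact Finset.sum_congr rfl fun j _ => by ring
  have hint : Integrable fun z => J z * (∑ i, ξ i * z i) ^ 2 := by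
    simp_rw [hexp]
    exact integrable_finsetSum _ fun k _ => integrable_finsetSum _ fun j _ =>
      (hmomint k j).const_mul _
  have hval : ∫ z, J z * (∑ i, ξ i * z i) ^ 2 = ∑ i, ξ i ^ 2 := by
    simp_rw [hexp]
    rw [integral_finsetSum _ fun k _ => integrable_finsetSum _ fun j _ =>
      (hmomint k j).const_mul _]
    refine Finset.sum_congr rfl fun k _ => ?_
    rw [integral_finsetSum _ fun j _ => (hmomint k j).const_mul _]
    simp_rw [integral_const_mul, hmom]
    simp [sq]
  rw [← hval, ← integral_const_mul]
  refine integral_mono (hint.const_mul _) (symb_integrable hJ ξ) fun z => ?_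
  by_cases hz : J z = 0
  · simp [hz]
  have hz' : ∀ i, |z i| ≤ π := fun i => by
    have := hsupp hz i (Set.mem_univ i)
    exact abs_le.2 ⟨this.1.le, this.2.le⟩
  have habs : |∑ i, ξ i * z i| ≤ π := by
    calc |∑ i, ξ i * z i| ≤ ∑ i, |ξ i * z i| := Finset.abs_sum_le_sum_abs _ _
      _ ≤ ∑ i, |ξ i| * π := Finset.sum_le_sum fun i _ => by
        rw [abs_mul]; exact mul_le_mul_of_nonneg_left (hz' i) (abs_nonneg _)
      _ = (∑ i, |ξ i|) * π := by rw [Finset.sum_mul]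
      _ ≤ 1 * π := mul_le_mul_of_nonneg_right hξ pi_pos.le
      _ = π := one_mul _
  have := cos_le_one_sub_mul_cos_sq habs
  have := mul_le_mul_of_nonneg_left this (hpos z)
  nlinarith [this]

/-- The set where `cos (ξ·z) = 1` is a countable union of affine hyperplanes. -/
lemma hyperplane_null {n : ℕ} {ξ : Fin n → ℝ} (hξ : ξ ≠ 0) :
    ∀ᵐ z : Fin n → ℝ, cos (∑ i, ξ i * z i) ≠ 1 := by
  obtain ⟨i₀, hi₀⟩ := Function.ne_iff.1 hξ
  let ℓ : (Fin n → ℝ) →ₗ[ℝ] ℝ := ∑ i, ξ i • LinearMap.proj i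
  have hℓ : ∀ z, ℓ z = ∑ i, ξ i * z i := fun z => by simp [ℓ]
  have key : ∀ c : ℝ, ∀ᵐ z : Fin n → ℝ, ℓ z ≠ c := by
    intro c
    let A : AffineSubspace ℝ (Fin n → ℝ) :=
      (AffineSubspace.mk' c ⊥).comap ℓ.toAffineMap
    have hA : ∀ z, z ∈ A ↔ ℓ z = c := fun z => by
      simp [A, AffineSubspace.mem_comap, AffineSubspace.mem_mk', sub_eq_zero]
    have hne : A ≠ ⊤ := by
      intro h
      have h0 : ℓ 0 = c := (hA 0).1 (h ▸ AffineSubspace.mem_top ℝ _ _)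
      have h1 : ℓ (Pi.single i₀ 1) = c := (hA _).1 (h ▸ AffineSubspace.mem_top ℝ _ _)
      rw [map_zero] at h0
      rw [← h0, hℓ] at h1
      simp [Pi.single_apply] at h1
      exact hi₀ h1
    have := Measure.addHaar_affineSubspace volume A hne
    rw [ae_iff]
    convert this using 2
    ext z
    simpa using (hA z).symm
  have := ae_all_iff.2 fun m : ℤ => key (m * (2 * π))
  filter_upwards [this] with z hz h
  obtain ⟨m, hm⟩ := (cos_eq_one_iff _).1 h
  exact hz m (by rw [hℓ, hm])

lemma symb_pos {n : ℕ} {J : (Fin n → ℝ) → ℝ} (hJ : Integrable J) (hpos : ∀ x, 0 ≤ J x)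
    (hmass : 0 < ∫ x, J x) {ξ : Fin n → ℝ} (hξ : ξ ≠ 0) : 0 < symb J ξ := by
  refine lt_of_le_of_ne (symb_nonneg hpos ξ) fun h => ?_
  have h0 := (integral_eq_zero_iff_of_nonneg
    (fun z => mul_nonneg (hpos z) (by simpa using cos_le_one _)) (symb_integrable hJ ξ)).1 h.symm
  have : ∫ x, J x = 0 := by
    refine integral_eq_zero_of_ae ?_
    filter_upwards [h0, hyperplane_null hξ] with z hz hz'
    simp only [Pi.zero_apply, mul_eq_zero] at hz ⊢
    refine hz.resolve_right fun hh => hz' ?_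
    linarith
  linarith

lemma symb_continuous {n : ℕ} {J : (Fin n → ℝ) → ℝ} (hJ : Integrable J) :
    Continuous (symb J) := by
  refine continuous_of_dominated (bound := fun z => ‖J z‖ * 2)
    (fun ξ => (symb_integrable hJ ξ).aestronglyMeasurable) (fun ξ => ?_) (hJ.norm.mul_const 2) ?_
  · refine Filter.Eventually.of_forall fun z => ?_
    rw [norm_mul]
    refine mul_le_mul_of_nonneg_left ?_ (norm_nonneg _)
    rw [Real.norm_eq_abs, abs_le]
    constructor <;> linarith [neg_one_le_cos (∑ i, ξ i * z i), cos_le_one (∑ i, ξ i * z i)]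
  · exact Filter.Eventually.of_forall fun z => by fun_prop

open Filter Topology in
/-- Riemann–Lebesgue: the symbol tends to the mass of the kernel at infinity. -/
lemma symb_tendsto {n : ℕ} {J : (Fin n → ℝ) → ℝ} (hJ : Integrable J) :
    Tendsto (symb J) (cocompact _) (𝓝 (∫ x, J x)) := by
  have hRL := tendsto_integral_exp_smul_cocompact (fun x => (J x : ℂ))
    (volume : Measure (Fin n → ℝ))
  -- `Φ ξ` is the functional `z ↦ (2π)⁻¹ ξ·z`, as the standard character is `t ↦ exp (2πit)`.
  let Φ : (Fin n → ℝ) →ₗ[ℝ] StrongDual ℝ (Fin n → ℝ) :=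
    { toFun := fun ξ => ∑ i, ((2 * π)⁻¹ * ξ i) • ContinuousLinearMap.proj i
      map_add' := fun a b => by simp [mul_add, add_smul, Finset.sum_add_distrib]
      map_smul' := fun a b => by
        simp only [Pi.smul_apply, smul_eq_mul, RingHom.id_apply, Finset.smul_sum, smul_smul]
        exact Finset.sum_congr rfl fun i _ => by congr 1; ring }
  have hΦ : ∀ ξ z, Φ ξ z = (2 * π)⁻¹ * ∑ i, ξ i * z i := fun ξ z => by
    simp only [Φ, LinearMap.coe_mk, AddHom.coe_mk, sum_apply,
      smul_apply, ContinuousLinearMap.proj_apply, smul_eq_mul, Finset.mul_sum,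
      mul_assoc]
  have hinj : LinearMap.ker Φ = ⊥ := by
    rw [LinearMap.ker_eq_bot']
    intro ξ h
    ext i
    have := hΦ ξ (Pi.single i 1)
    rw [h] at this
    simp [Pi.single_apply, pi_ne_zero] at this
    simpa using this
  have hcl := (LinearMap.isClosedEmbedding_of_injective hinj).tendsto_cocompact
  have h2 := (Complex.continuous_re.tendsto _).comp (hRL.comp hcl)
  have h3 := h2.const_sub (∫ x, J x)
  simp only [Complex.zero_re, sub_zero] at h3
  refine h3.congr fun ξ => ?_
  have hint : Integrable fun v => Real.fourierChar (-(Φ ξ v)) • (J v : ℂ) := by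
    refine (integrable_norm_iff ?_).1 ?_
    · refine AEStronglyMeasurable.smul ?_ hJ.ofReal.aestronglyMeasurable
      exact (continuous_subtype_val.comp
        (Real.continuous_fourierChar.comp (Φ ξ).continuous.neg)).aestronglyMeasurable
    · simpa using hJ.norm
  simp only [Function.comp_apply]
  rw [← RCLike.re_eq_complex_re, ← integral_re hint, ← integral_sub hJ hint.re]
  unfold symb
  refine integral_congr_ae (Eventually.of_forall fun z => ?_)
  simp only [Circle.smul_def, Real.fourierChar_apply, hΦ, smul_eq_mul, RCLike.re_eq_complex_re,
    Complex.re_mul_ofReal]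
  have : 2 * π * -((2 * π)⁻¹ * ∑ i, ξ i * z i) = - ∑ i, ξ i * z i := by
    field_simp
  rw [this, Complex.exp_ofReal_mul_I_re, cos_neg]
  ring

open Filter Topology in
/-- Away from the origin the symbol is bounded below by a positive constant: by Riemann–Lebesgue
outside a compact set, by continuity and positivity inside it. For `n = 0` the claim is vacuous. -/
lemma symb_high {n : ℕ} {J : (Fin n → ℝ) → ℝ} (hJ : Integrable J) (hpos : ∀ x, 0 ≤ J x)
    (hmom : ∀ k j : Fin n,
      (∫ x : Fin n → ℝ, J x * x k * x j) = if k = j then (1 : ℝ) else 0) :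
    ∃ c > 0, ∀ ξ : Fin n → ℝ, 1 ≤ ∑ i, |ξ i| → c ≤ symb J ξ := by
  rcases isEmpty_or_nonempty (Fin n) with hn | ⟨⟨i₀⟩⟩
  · exact ⟨1, one_pos, fun ξ h => by simp at h; linarith⟩
  -- A kernel of zero mass would vanish a.e., contradicting the normalised second moment.
  have hmass : 0 < ∫ x, J x := by
    refine lt_of_le_of_ne (integral_nonneg hpos) fun h => ?_
    have h0 := (integral_eq_zero_iff_of_nonneg hpos hJ).1 h.symm
    have h1 := hmom i₀ i₀
    rw [integral_eq_zero_of_ae] at h1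
    · simp at h1
    · filter_upwards [h0] with z hz
      simp at hz
      simp [hz]
  have hev : ∀ᶠ ξ in cocompact _, (∫ x, J x) / 2 < symb J ξ :=
    (symb_tendsto hJ).eventually_const_lt (half_lt_self hmass)
  obtain ⟨K, hK, hKs⟩ := mem_cocompact.1 hev
  have hcl : IsClosed {ξ : Fin n → ℝ | 1 ≤ ∑ i, |ξ i|} :=
    isClosed_le continuous_const (by fun_prop)
  have hK' := hK.inter_right hcl
  rcases (K ∩ {ξ : Fin n → ℝ | 1 ≤ ∑ i, |ξ i|}).eq_empty_or_nonempty with he | hne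
  · refine ⟨(∫ x, J x) / 2, by positivity, fun ξ hξ => ?_⟩
    have : ξ ∉ K := fun h => (he ▸ (⟨h, hξ⟩ : ξ ∈ K ∩ _) : ξ ∈ (∅ : Set _))
    exact (hKs this).le
  · obtain ⟨ξ₀, hξ₀, hmin⟩ := hK'.exists_isMinOn hne (symb_continuous hJ).continuousOn
    have hne0 : ξ₀ ≠ 0 := by
      rintro rfl
      have := hξ₀.2
      simp at this
      linarith
    refine ⟨min ((∫ x, J x) / 2) (symb J ξ₀), lt_min (by positivity) (symb_pos hJ hpos hmass hne0),
      fun ξ hξ => ?_⟩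
    by_cases h : ξ ∈ K
    · exact (min_le_right _ _).trans (hmin ⟨h, hξ⟩)
    · exact (min_le_left _ _).trans (hKs h : (∫ x, J x) / 2 < symb J ξ).le

/-! ### The box and the torus -/

/-- Normalised Haar measure on the torus `(ℝ/ℤ)ⁿ`. -/
abbrev tμ (n : ℕ) : Measure (UnitAddTorus (Fin n)) := Measure.pi fun _ => AddCircle.haarAddCircle

/-- The section `(ℝ/ℤ)ⁿ → (-π, π]ⁿ` of the quotient map `x ↦ x / 2π mod ℤⁿ`. -/
def sec (n : ℕ) (t : UnitAddTorus (Fin n)) : Fin n → ℝ :=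
  (2 * π) • ((UnitAddTorus.measurableEquivPiIoc (fun _ : Fin n => (-1/2 : ℝ)) t).1)

/-- `sec` is a section of `x ↦ x / 2π mod ℤⁿ`. -/
lemma coe_sec {n : ℕ} (t : UnitAddTorus (Fin n)) (i : Fin n) :
    ((sec n t i / (2 * π) : ℝ) : UnitAddCircle) = t i := by
  have h : sec n t i / (2 * π) = (AddCircle.equivIoc 1 (-1/2 : ℝ) (t i)).1 := by
    simp only [sec, Pi.smul_apply, smul_eq_mul, UnitAddTorus.coe_measurableEquivPiIoc_apply]
    field_simp
  rw [h]
  exact (AddCircle.equivIoc 1 (-1/2 : ℝ)).symm_apply_apply (t i)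

/-- A periodic function depends only on the class of `x / 2π` modulo `ℤⁿ`. -/
lemma TPeriodic.congr_coe {n : ℕ} {f : (Fin n → ℝ) → ℝ} (hf : TPeriodic f) {x y : Fin n → ℝ}
    (h : ∀ i, ((x i / (2 * π) : ℝ) : UnitAddCircle) = ((y i / (2 * π) : ℝ) : UnitAddCircle)) :
    f x = f y := by
  have : ∀ i, ∃ m : ℤ, x i = y i + 2 * π * m := fun i => by
    have h1 := QuotientAddGroup.eq_iff_sub_mem.1 (h i)
    obtain ⟨m, hm⟩ := AddSubgroup.mem_zmultiples_iff.1 h1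
    refine ⟨m, ?_⟩
    simp only [zsmul_eq_mul, mul_one] at hm
    rw [hm]
    field_simp
    ring
  choose m hm using this
  rw [← hf y m]
  congr 1
  ext i
  simp [hm i]

/-- `sec` is not additive, but periodic functions do not see the difference. -/
lemma TPeriodic.sec_sub {n : ℕ} {f : (Fin n → ℝ) → ℝ} (hf : TPeriodic f)
    (a b : UnitAddTorus (Fin n)) : f (sec n a - sec n b) = f (sec n (a - b)) := by
  refine hf.congr_coe fun i => ?_
  rw [coe_sec, Pi.sub_apply, sub_div, AddCircle.coe_sub, coe_sec, coe_sec, Pi.sub_apply]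

lemma sec_measurableEmbedding (n : ℕ) : MeasurableEmbedding (sec n) := by
  have h2 : MeasurableEmbedding fun x : Fin n → ℝ => (2 * π) • x :=
    (Homeomorph.smulOfNeZero (2 * π) (by positivity)).measurableEmbedding
  have hs : MeasurableSet {x : Fin n → ℝ | ∀ i, x i ∈ Set.Ioc (-1/2 : ℝ) (-1/2 + 1)} :=
    MeasurableSet.univ_pi' fun i => measurableSet_Ioc
  exact h2.comp ((MeasurableEmbedding.subtype_coe hs).comp (MeasurableEquiv.measurableEmbedding _))

lemma measurableSet_Box (n : ℕ) : MeasurableSet (Box n) :=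
  MeasurableSet.univ_pi fun _ => measurableSet_Icc

lemma sec_mem_Box {n : ℕ} (t : UnitAddTorus (Fin n)) : sec n t ∈ Box n := by
  intro i _
  have := (UnitAddTorus.measurableEquivPiIoc (fun _ : Fin n => (-1/2 : ℝ)) t).2 i
  simp only [sec, Pi.smul_apply, smul_eq_mul]
  constructor <;> nlinarith [pi_pos, this.1, this.2]

/-- `sec` transports Haar measure to normalised Lebesgue measure on the box. -/
lemma map_sec (n : ℕ) :
    (tμ n).map (sec n) = ENNReal.ofReal ((2 * π) ^ n)⁻¹ • volume.restrict (Box n) := by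
  have hs : MeasurableSet {x : Fin n → ℝ | ∀ i, x i ∈ Set.Ioc (-1/2 : ℝ) (-1/2 + 1)} :=
    MeasurableSet.univ_pi' fun i => measurableSet_Ioc
  have h1 := (UnitAddTorus.measurePreserving_equivPiIoc (fun _ : Fin n => (-1/2 : ℝ))).map_eq
  have h2 : MeasurableEmbedding fun x : Fin n → ℝ => (2 * π) • x :=
    (Homeomorph.smulOfNeZero (2 * π) (by positivity)).measurableEmbedding
  have e : sec n = (fun x : Fin n → ℝ => (2 * π) • x) ∘ (Subtype.val ∘
    UnitAddTorus.measurableEquivPiIoc (fun _ : Fin n => (-1/2 : ℝ))) := rfl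
  rw [e, ← Measure.map_map h2.measurable
    (measurable_subtype_coe.comp (MeasurableEquiv.measurable _)),
    ← Measure.map_map measurable_subtype_coe (MeasurableEquiv.measurable _)]
  have h1' : (tμ n).map (UnitAddTorus.measurableEquivPiIoc (fun _ : Fin n => (-1/2 : ℝ)))
      = Measure.comap Subtype.val volume := h1
  have h3 : Measure.map (Subtype.val : {x : Fin n → ℝ // ∀ i, x i ∈ Set.Ioc (-1/2 : ℝ) (-1/2 + 1)}
      → Fin n → ℝ) (Measure.comap Subtype.val volume) =
      volume.restrict {x : Fin n → ℝ | ∀ i, x i ∈ Set.Ioc (-1/2 : ℝ) (-1/2 + 1)} :=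
    map_comap_subtype_coe hs volume
  rw [h1', h3]
  have hpre : {x : Fin n → ℝ | ∀ i, x i ∈ Set.Ioc (-1/2 : ℝ) (-1/2 + 1)} =
      (fun x : Fin n → ℝ => (2 * π) • x) ⁻¹' (Set.univ.pi fun _ => Set.Ioc (-π) π) := by
    ext x
    simp only [Set.mem_ofPred_eq, Set.mem_preimage, Set.mem_univ_pi, Pi.smul_apply, smul_eq_mul,
      Set.mem_Ioc]
    refine forall_congr' fun i => and_congr ⟨fun h => ?_, fun h => ?_⟩ ⟨fun h => ?_, fun h => ?_⟩ <;>
      nlinarith [pi_pos]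
  rw [hpre, ← h2.restrict_map, Measure.map_addHaar_smul _ (by positivity), Measure.restrict_smul]
  congr 1
  · rw [Module.finrank_fin_fun, abs_of_nonneg (by positivity)]
  · refine Measure.restrict_congr_set ?_
    unfold Box
    rw [Set.pi_univ_Icc]
    exact Measure.univ_pi_Ioc_ae_eq_Icc

lemma setIntegral_Box {n : ℕ} {E : Type*} [NormedAddCommGroup E] [NormedSpace ℝ E]
    (F : (Fin n → ℝ) → E) :
    ∫ x in Box n, F x = (2 * π) ^ n • ∫ t, F (sec n t) ∂(tμ n) := by
  rw [← (sec_measurableEmbedding n).integral_map, map_sec, integral_smul_measure, smul_smul,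
    ENNReal.toReal_ofReal (by positivity), mul_inv_cancel₀ (by positivity), one_smul]

lemma integrable_sec {n : ℕ} {E : Type*} [NormedAddCommGroup E] {F : (Fin n → ℝ) → E}
    (h : IntegrableOn F (Box n)) : Integrable (fun t => F (sec n t)) (tμ n) := by
  have : Integrable F ((tμ n).map (sec n)) := by
    rw [map_sec]
    exact h.integrable.smul_measure ENNReal.ofReal_ne_top
  exact this.comp_measurable (sec_measurableEmbedding n).measurable

open UnitAddTorus in
lemma mFourier_eq {n : ℕ} (k : Fin n → ℤ) (t : UnitAddTorus (Fin n)) :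
    mFourier k t = Complex.exp (Complex.I * ((∑ i, (k i : ℝ) * sec n t i : ℝ) : ℂ)) := by
  have : ∀ i, fourier (k i) (t i) = Complex.exp (Complex.I * ((k i : ℝ) * sec n t i : ℝ)) := by
    intro i
    rw [← coe_sec t i, fourier_coe_apply]
    congr 1
    push_cast
    have : (π : ℂ) ≠ 0 := by exact_mod_cast pi_ne_zero
    field_simp
  simp only [mFourier, ContinuousMap.coe_mk, this]
  rw [← Complex.exp_sum, Complex.ofReal_sum, Finset.mul_sum]

open UnitAddTorus in
lemma fcoef_eq {n : ℕ} (u : (Fin n → ℝ) → ℝ) (k : Fin n → ℤ) :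
    fcoef u k = (2 * π) ^ n • mFourierCoeff (fun t => (u (sec n t) : ℂ)) k := by
  rw [fcoef, setIntegral_Box]
  congr 1
  refine integral_congr_ae (Filter.Eventually.of_forall fun t => ?_)
  simp only [mFourier_eq, smul_eq_mul]
  congr 2
  simp [Finset.sum_neg_distrib]

/-! ### Fourier analysis of the energy -/

open UnitAddTorus

/-- Parseval's identity for a square-integrable function instead of a class in `Lp`. -/
lemma parseval {n : ℕ} {w : UnitAddTorus (Fin n) → ℂ} (hw : MemLp w 2 (tμ n)) :
    HasSum (fun k => ‖mFourierCoeff w k‖ ^ 2) (∫ t, ‖w t‖ ^ 2 ∂(tμ n)) := by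
  have h := hasSum_sq_mFourierCoeff (hw.toLp w)
  have e : (hw.toLp w : UnitAddTorus (Fin n) → ℂ) =ᵐ[tμ n] w := hw.coeFn_toLp
  have e1 : ∀ k, mFourierCoeff (hw.toLp w : UnitAddTorus (Fin n) → ℂ) k = mFourierCoeff w k := by
    intro k
    refine integral_congr_ae ?_
    filter_upwards [e] with t ht
    rw [ht]
  have e2 : ∫ t, ‖(hw.toLp w : UnitAddTorus (Fin n) → ℂ) t‖ ^ 2 ∂(tμ n)
      = ∫ t, ‖w t‖ ^ 2 ∂(tμ n) := by
    refine integral_congr_ae ?_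
    filter_upwards [e] with t ht
    rw [ht]
  simp only [e1] at h
  rw [← e2]
  exact h

lemma mFourier_add_apply {n : ℕ} (k : Fin n → ℤ) (s t : UnitAddTorus (Fin n)) :
    mFourier k (s + t) = mFourier k s * mFourier k t := by
  simp only [mFourier, ContinuousMap.coe_mk, ← Finset.prod_mul_distrib, fourier_apply,
    Pi.add_apply, smul_add, AddCircle.toCircle_add, Circle.coe_mul]

lemma integrable_mFourier_mul {n : ℕ} {w : UnitAddTorus (Fin n) → ℂ} (hw : Integrable w (tμ n))
    (k : Fin n → ℤ) : Integrable (fun t => mFourier k t • w t) (tμ n) := by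
  refine hw.bdd_mul (c := 1) (mFourier k).continuous.aestronglyMeasurable
    (Filter.Eventually.of_forall fun t => ?_)
  exact ((mFourier k).norm_coe_le_norm t).trans_eq mFourier_norm

/-- A translation difference multiplies Fourier coefficients by `1 - e^{-ik·c}`. -/
lemma mFourierCoeff_diff {n : ℕ} {w : UnitAddTorus (Fin n) → ℂ} (hw : Integrable w (tμ n))
    (c : UnitAddTorus (Fin n)) (k : Fin n → ℤ) :
    mFourierCoeff (fun t => w t - w (t - c)) k = (1 - mFourier (-k) c) * mFourierCoeff w k := by
  change ∫ t, mFourier (-k) t • (w t - w (t - c)) ∂(tμ n) =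
    (1 - mFourier (-k) c) * ∫ t, mFourier (-k) t • w t ∂(tμ n)
  have h1 : ∫ t, mFourier (-k) t • w (t - c) ∂(tμ n) =
      mFourier (-k) c * ∫ t, mFourier (-k) t • w t ∂(tμ n) := by
    rw [← integral_sub_right_eq_self (fun t => mFourier (-k) t • w t) c, ← integral_const_mul]
    refine integral_congr_ae (Filter.Eventually.of_forall fun t => ?_)
    have : mFourier (-k) t = mFourier (-k) c * mFourier (-k) (t - c) := by
      rw [← mFourier_add_apply, add_sub_cancel]
    simp only [this, smul_eq_mul, mul_assoc]
  simp only [smul_sub]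
  rw [integral_sub (integrable_mFourier_mul hw _)
    (integrable_mFourier_mul (hw.comp_sub_right c) _), h1]
  ring

lemma norm_one_sub_mFourier {n : ℕ} (k : Fin n → ℤ) (c : UnitAddTorus (Fin n)) :
    ‖1 - mFourier (-k) c‖ ^ 2 = 2 * (1 - cos (∑ i, (k i : ℝ) * sec n c i)) := by
  have : (∑ i, (((-k) i : ℤ) : ℝ) * sec n c i : ℝ) = -∑ i, (k i : ℝ) * sec n c i := by
    simp [Finset.sum_neg_distrib]
  rw [mFourier_eq, this, mul_comm, Complex.sq_norm, Complex.normSq_apply]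
  simp only [Complex.sub_re, Complex.sub_im, Complex.exp_ofReal_mul_I_re,
    Complex.exp_ofReal_mul_I_im, Complex.one_re, Complex.one_im, cos_neg, sin_neg]
  nlinarith [sin_sq_add_cos_sq (∑ i, (k i : ℝ) * sec n c i)]

/-- Bessel's inequality for the translation difference `v - v(· - c)`. -/
lemma bessel_diff {n : ℕ} {v : UnitAddTorus (Fin n) → ℝ} (hv : MemLp v 2 (tμ n))
    (c : UnitAddTorus (Fin n)) (S : Finset (Fin n → ℤ)) :
    ∑ k ∈ S, 2 * (1 - cos (∑ i, (k i : ℝ) * sec n c i)) *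
        ‖mFourierCoeff (fun t => (v t : ℂ)) k‖ ^ 2
      ≤ ∫ a, (v a - v (a - c)) ^ 2 ∂(tμ n) := by
  have hw : MemLp (fun t => (v t : ℂ)) 2 (tμ n) := hv.ofReal
  have hwc : MemLp (fun t => (v (t - c) : ℂ)) 2 (tμ n) :=
    hw.comp_measurePreserving (measurePreserving_sub_right (tμ n) c)
  have hp := parseval (hw.sub hwc)
  have h := sum_le_hasSum S (fun k _ => by positivity) hp
  have e1 : ∀ k, mFourierCoeff ((fun t => (v t : ℂ)) - fun t => (v (t - c) : ℂ)) k =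
      (1 - mFourier (-k) c) * mFourierCoeff (fun t => (v t : ℂ)) k := fun k =>
    mFourierCoeff_diff (hw.integrable (by norm_num)) c k
  simp only [e1, norm_mul, mul_pow, norm_one_sub_mFourier] at h
  refine h.trans_eq (integral_congr_ae (Filter.Eventually.of_forall fun a => ?_))
  simp only [Pi.sub_apply, ← Complex.ofReal_sub, Complex.norm_real, Real.norm_eq_abs, sq_abs]

/-- Integrability of the energy density after the substitution `y = x - c`; it justifies the
exchange of integrals and rests on `(s - t)² ≤ 2 (s² + t²)`. -/
lemma energy_integrable {n : ℕ} {v G : UnitAddTorus (Fin n) → ℝ} (hv : MemLp v 2 (tμ n))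
    (hG : Integrable G (tμ n)) (hG0 : ∀ c, 0 ≤ G c) :
    Integrable (fun p : UnitAddTorus (Fin n) × UnitAddTorus (Fin n) =>
      G p.2 * (v p.1 - v (p.1 - p.2)) ^ 2) ((tμ n).prod (tμ n)) := by
  have hv2 : Integrable (fun a => v a ^ 2) (tμ n) := hv.integrable_sq
  have h1 : Integrable (fun p : UnitAddTorus (Fin n) × UnitAddTorus (Fin n) =>
      v p.1 ^ 2 * G p.2) ((tμ n).prod (tμ n)) := hv2.mul_prod hG
  have h2 : Integrable (fun p : UnitAddTorus (Fin n) × UnitAddTorus (Fin n) =>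
      G p.2 * v (p.1 - p.2) ^ 2) ((tμ n).prod (tμ n)) :=
    hG.convolution_integrand (ContinuousLinearMap.mul ℝ ℝ) hv2
  refine ((h1.add h2).const_mul 2).mono' ?_ (Filter.Eventually.of_forall fun p => ?_)
  · refine hG.aestronglyMeasurable.comp_snd.mul (AEStronglyMeasurable.pow ?_ 2)
    refine hv.aestronglyMeasurable.comp_fst.sub ?_
    exact hv.aestronglyMeasurable.comp_quasiMeasurePreserving
      (quasiMeasurePreserving_sub_of_right_invariant (tμ n) (tμ n))
  · rw [Real.norm_of_nonneg (mul_nonneg (hG0 _) (sq_nonneg _))]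
    simp only [Pi.add_apply]
    nlinarith [mul_nonneg (hG0 p.2) (sq_nonneg (v p.1 + v (p.1 - p.2)))]

/-- The torus energy dominates every finite part of its Fourier representation. -/
lemma energy_lower {n : ℕ} {v G : UnitAddTorus (Fin n) → ℝ} (hv : MemLp v 2 (tμ n))
    (hG : Integrable G (tμ n)) (hG0 : ∀ c, 0 ≤ G c) (S : Finset (Fin n → ℤ)) :
    ∑ k ∈ S, 2 * (∫ c, G c * (1 - cos (∑ i, (k i : ℝ) * sec n c i)) ∂(tμ n)) *
        ‖mFourierCoeff (fun t => (v t : ℂ)) k‖ ^ 2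
      ≤ ∫ a, ∫ b, G (a - b) * (v a - v b) ^ 2 ∂(tμ n) ∂(tμ n) := by
  have hE := energy_integrable hv hG hG0
  have e : ∀ a, ∫ b, G (a - b) * (v a - v b) ^ 2 ∂(tμ n) =
      ∫ c, G c * (v a - v (a - c)) ^ 2 ∂(tμ n) := fun a => by
    have : (AddCircle.haarAddCircle : Measure UnitAddCircle).IsNegInvariant := by
      unfold AddCircle.haarAddCircle
      infer_instance
    rw [← integral_sub_left_eq_self (fun c => G c * (v a - v (a - c)) ^ 2) (tμ n) a]
    simp only [sub_sub_cancel]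
  simp only [e]
  rw [integral_integral_swap hE]
  have hi : ∀ k : Fin n → ℤ,
      Integrable (fun c => G c * (1 - cos (∑ i, (k i : ℝ) * sec n c i))) (tμ n) := fun k => by
    refine hG.mul_bdd (c := 2) ?_ (Filter.Eventually.of_forall fun z => ?_)
    · exact ((by fun_prop : Continuous fun z : Fin n → ℝ =>
        1 - cos (∑ i, (k i : ℝ) * z i)).measurable.comp
        (sec_measurableEmbedding n).measurable).aestronglyMeasurable
    · rw [Real.norm_eq_abs, abs_le]
      constructor <;> linarith [neg_one_le_cos (∑ i, (k i : ℝ) * sec n z i),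
        cos_le_one (∑ i, (k i : ℝ) * sec n z i)]
  simp only [← integral_const_mul, ← integral_mul_const]
  rw [← integral_finsetSum _ fun k _ => ((hi k).const_mul 2).mul_const _]
  refine integral_mono (integrable_finsetSum _ fun k _ => ((hi k).const_mul 2).mul_const _)
    hE.integral_prod_right fun c => ?_
  simp only [integral_const_mul]
  refine le_trans (le_of_eq ?_) (mul_le_mul_of_nonneg_left (bessel_diff hv c S) (hG0 c))
  rw [Finset.mul_sum]
  exact Finset.sum_congr rfl fun k _ => by ring

/-- The Fourier weight of the rescaled periodic kernel is `η⁻² φ(ηk)`, up to the factor `(2π)⁻ⁿ`.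
The support of the rescaled kernel lies in the box because `η ≤ 1`. -/
lemma symb_scaled {n : ℕ} {J1 Jt : (Fin n → ℝ) → ℝ}
    (hJ1supp : Function.support J1 ⊆ Set.univ.pi fun _ => Set.Ioo (-π) π)
    {η : ℝ} (hη : 0 < η) (hη1 : η ≤ 1)
    (hJt : ∀ x ∈ Box n, Jt x = η ^ (-(n:ℤ) - 2) * J1 (η⁻¹ • x)) (k : Fin n → ℤ) :
    ∫ c, Jt (sec n c) * (1 - cos (∑ i, (k i : ℝ) * sec n c i)) ∂(tμ n) =
      ((2 * π) ^ n)⁻¹ * ((η ^ 2)⁻¹ * symb J1 fun i => η * k i) := by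
  have h1 := setIntegral_Box (n := n) fun z => Jt z * (1 - cos (∑ i, (k i : ℝ) * z i))
  have h2 : ∫ z in Box n, Jt z * (1 - cos (∑ i, (k i : ℝ) * z i)) =
      (η ^ 2)⁻¹ * symb J1 fun i => η * k i := by
    let g : (Fin n → ℝ) → ℝ := fun w => J1 w * (1 - cos (∑ i, η * k i * w i))
    have hg : ∀ z, g (η⁻¹ • z) = J1 (η⁻¹ • z) * (1 - cos (∑ i, (k i : ℝ) * z i)) := fun z => by
      simp only [g, Pi.smul_apply, smul_eq_mul]
      congr 4
      ext i
      field_simp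
    have hsub : (Function.support fun z => g (η⁻¹ • z)) ⊆ Box n := by
      intro z hz
      have hz' : J1 (η⁻¹ • z) ≠ 0 := left_ne_zero_of_mul hz
      intro i _
      have := hJ1supp hz' i (Set.mem_univ i)
      simp only [Pi.smul_apply, smul_eq_mul, Set.mem_Ioo] at this
      rw [← div_eq_inv_mul, lt_div_iff₀ hη, div_lt_iff₀ hη] at this
      constructor <;> nlinarith [pi_pos, this.1, this.2]
    calc ∫ z in Box n, Jt z * (1 - cos (∑ i, (k i : ℝ) * z i))
        = ∫ z in Box n, η ^ (-(n:ℤ) - 2) * g (η⁻¹ • z) :=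
          setIntegral_congr_fun (measurableSet_Box n) fun z hz => by
            simp only [hJt z hz, hg, mul_assoc]
      _ = η ^ (-(n:ℤ) - 2) * ∫ z in Box n, g (η⁻¹ • z) := integral_const_mul _ _
      _ = η ^ (-(n:ℤ) - 2) * ∫ z, g (η⁻¹ • z) := by
          rw [setIntegral_eq_integral_of_forall_compl_eq_zero fun z hz => ?_]
          by_contra h
          exact hz (hsub h)
      _ = η ^ (-(n:ℤ) - 2) * (η ^ n * symb J1 fun i => η * k i) := by
          rw [Measure.integral_comp_inv_smul_of_nonneg _ _ hη.le, Module.finrank_fin_fun]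
          rfl
      _ = (η ^ 2)⁻¹ * symb J1 fun i => η * k i := by
          rw [← mul_assoc]
          congr 1
          rw [zpow_sub₀ hη.ne', zpow_neg, zpow_natCast]
          have : η ^ n ≠ 0 := by positivity
          field_simp
  rw [h2, smul_eq_mul] at h1
  rw [h1, inv_mul_cancel_left₀ (by positivity)]

/-- The pointwise multiplier inequality behind the Ehrling estimate: frequencies
`|k| ≤ R` are controlled by the `H⁻¹` weight, frequencies `|k| ≥ R` by the nonlocal symbol. -/
lemma multiplier_bound {n : ℕ} {J : (Fin n → ℝ) → ℝ} (hJ : Integrable J) (hpos : ∀ x, 0 ≤ J x)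
    (hsupp : Function.support J ⊆ Set.univ.pi fun _ => Set.Ioo (-π) π)
    (hmomint : ∀ k j : Fin n, Integrable fun x : Fin n → ℝ => J x * x k * x j)
    (hmom : ∀ k j : Fin n,
      (∫ x : Fin n → ℝ, J x * x k * x j) = if k = j then (1 : ℝ) else 0) :
    ∃ A > 0, ∀ R η : ℝ, 1 ≤ R → 0 < η → η ≤ 1 / R → ∀ k : Fin n → ℤ,
      1 ≤ A / R ^ 2 * ((η ^ 2)⁻¹ * symb J fun i => η * k i) +
        2 * R ^ 2 * (1 + ∑ i, (k i : ℝ) ^ 2)⁻¹ := by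
  obtain ⟨c, hc, hhigh⟩ := symb_high hJ hpos hmom
  have hd : 0 < min (2 / π ^ 2) c := lt_min (by positivity) hc
  refine ⟨(min (2 / π ^ 2) c)⁻¹, inv_pos.2 hd, fun R η hR hη hηR k => ?_⟩
  set d := min (2 / π ^ 2) c with hd_def
  have hR0 : 0 < R := by linarith
  have hs0 : 0 ≤ ∑ i, (k i : ℝ) ^ 2 := Finset.sum_nonneg fun i _ => sq_nonneg _
  have hm0 := symb_nonneg hpos fun i => η * (k i : ℝ)
  have hR2 : 1 ≤ R ^ 2 := one_le_pow₀ hR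
  rcases le_total (∑ i, (k i : ℝ) ^ 2) (R ^ 2) with h | h
  · have h1 : 1 ≤ 2 * R ^ 2 * (1 + ∑ i, (k i : ℝ) ^ 2)⁻¹ := by
      rw [← div_eq_mul_inv, one_le_div (by positivity)]
      linarith
    have h2 : 0 ≤ d⁻¹ / R ^ 2 * ((η ^ 2)⁻¹ * symb J fun i => η * k i) := by positivity
    linarith
  · have h1 : 0 ≤ 2 * R ^ 2 * (1 + ∑ i, (k i : ℝ) ^ 2)⁻¹ := by positivity
    have hηR' : η * R ≤ 1 := by rwa [le_div_iff₀ hR0] at hηR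
    have hηR2 : η ^ 2 * R ^ 2 ≤ 1 := by
      rw [← mul_pow]; exact pow_le_one₀ (by positivity) hηR'
    have key : d * (η ^ 2 * R ^ 2) ≤ symb J fun i => η * (k i : ℝ) := by
      rcases le_total (∑ i, |η * (k i : ℝ)|) 1 with h' | h'
      · have hl := symb_low hJ hpos hsupp hmomint hmom _ h'
        simp only [mul_pow, ← Finset.mul_sum] at hl
        refine le_trans ?_ hl
        have : η ^ 2 * R ^ 2 ≤ η ^ 2 * ∑ i, (k i : ℝ) ^ 2 :=
          mul_le_mul_of_nonneg_left h (by positivity)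
        exact mul_le_mul (min_le_left _ _) this (by positivity) (by positivity)
      · have := hhigh _ h'
        have h3 : d * (η ^ 2 * R ^ 2) ≤ d * 1 := mul_le_mul_of_nonneg_left hηR2 hd.le
        linarith [min_le_right (2 / π ^ 2) c]
    have h2 : 1 ≤ d⁻¹ / R ^ 2 * ((η ^ 2)⁻¹ * symb J fun i => η * k i) := by
      calc (1:ℝ) = d⁻¹ / R ^ 2 * ((η ^ 2)⁻¹ * (d * (η ^ 2 * R ^ 2))) := by field_simp
        _ ≤ _ := by gcongr
    linarith

/-! ### The inequality -/

/-- nonlocal Ehrling inequality. For kernels J_η(x) = η^{-n-2}J₁(x/η)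
with J₁ ∈ L¹ nonnegative, even, supported in (−π,π)ⁿ and second-moment matrix the
identity, there is C > 0 independent of R ≥ 1, 0 < η ≤ 1/R and u ∈ L²(𝕋ⁿ) such that
‖u‖²_{L²} ≤ (C/R²)·E_η(u) + C·R²·‖u‖²_{H⁻¹}. -/
theorem nonlocal_ehrling (n : ℕ) (J1 : (Fin n → ℝ) → ℝ)
    (hJ1int : Integrable J1) (hJ1pos : ∀ x, 0 ≤ J1 x) (hJ1even : ∀ x, J1 (-x) = J1 x)
    (hJ1supp : Function.support J1 ⊆ Set.univ.pi fun _ => Set.Ioo (-π) π)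
    (hmomint : ∀ k j : Fin n, Integrable fun x : Fin n → ℝ => J1 x * x k * x j)
    (hmom : ∀ k j : Fin n,
      (∫ x : Fin n → ℝ, J1 x * x k * x j) = if k = j then (1 : ℝ) else 0) :
    ∃ C > (0:ℝ), ∀ (R η : ℝ), 1 ≤ R → 0 < η → η ≤ 1 / R →
      ∀ u Jt : (Fin n → ℝ) → ℝ, TPeriodic u → TPeriodic Jt →
        (∀ x ∈ Box n, Jt x = η ^ (-(n:ℤ) - 2) * J1 (η⁻¹ • x)) →
        Measurable u → IntegrableOn (fun x => (u x) ^ 2) (Box n) →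
        (∫ x in Box n, (u x) ^ 2) ≤
          (C / R ^ 2) *
            ((1/4) * ∫ x in Box n, ∫ y in Box n, Jt (x - y) * (u x - u y) ^ 2)
          + C * R ^ 2 * ∑' k : Fin n → ℤ,
              (1 + ∑ i, (k i : ℝ) ^ 2)⁻¹ * ‖fcoef u k‖ ^ 2 := by
  obtain ⟨A, hA, hmult⟩ := multiplier_bound hJ1int hJ1pos hJ1supp hmomint hmom
  refine ⟨2 * A + 2, by positivity, fun R η hR hη hηR u Jt _ hJtp hJt hu hu2 => ?_⟩
  have hR0 : 0 < R := by linarith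
  have hη1 : η ≤ 1 := hηR.trans ((div_le_one hR0).2 hR)
  have hη0 : 0 < η ^ (-(n:ℤ) - 2) := by positivity
  have hP : 1 ≤ (2 * π) ^ n := one_le_pow₀ (by linarith [pi_gt_three])
  set P := (2 * π) ^ n with hP_def
  set v : UnitAddTorus (Fin n) → ℝ := fun t => u (sec n t) with hv_def
  set G : UnitAddTorus (Fin n) → ℝ := fun t => Jt (sec n t) with hG_def
  set a : (Fin n → ℤ) → ℝ := fun k => ‖mFourierCoeff (fun t => (v t : ℂ)) k‖ ^ 2 with ha_def
  have hv : MemLp v 2 (tμ n) := by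
    refine (memLp_two_iff_integrable_sq ?_).2 (integrable_sec hu2)
    exact (hu.comp (sec_measurableEmbedding n).measurable).aestronglyMeasurable
  have hG : Integrable G (tμ n) := by
    refine integrable_sec (F := Jt) ?_
    refine ((((hJ1int.comp_smul (inv_ne_zero hη.ne')).const_mul
      (η ^ (-(n:ℤ) - 2))).integrableOn).congr_fun (fun x hx => ?_) (measurableSet_Box n))
    exact (hJt x hx).symm
  have hG0 : ∀ c, 0 ≤ G c := fun c => by
    simp only [hG_def, hJt _ (sec_mem_Box c)]
    exact mul_nonneg hη0.le (hJ1pos _)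
  have hL2 : ∫ x in Box n, u x ^ 2 = P * ∫ t, v t ^ 2 ∂(tμ n) := setIntegral_Box _
  have hsum : HasSum a (∫ t, v t ^ 2 ∂(tμ n)) := by
    have := parseval (w := fun t => (v t : ℂ)) hv.ofReal
    simpa only [Complex.norm_real, Real.norm_eq_abs, sq_abs] using this
  have hEn : ∫ x in Box n, ∫ y in Box n, Jt (x - y) * (u x - u y) ^ 2 =
      P * (P * ∫ a, ∫ b, G (a - b) * (v a - v b) ^ 2 ∂(tμ n) ∂(tμ n)) := by
    rw [setIntegral_Box, smul_eq_mul]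
    congr 1
    rw [← integral_const_mul]
    congr 1
    ext a
    rw [setIntegral_Box, smul_eq_mul]
    simp only [hJtp.sec_sub, hG_def, hv_def, hP_def]
  have hH : ∀ k, ‖fcoef u k‖ ^ 2 = P ^ 2 * a k := fun k => by
    rw [fcoef_eq, norm_smul, mul_pow, Real.norm_of_nonneg (by positivity)]
  set T := ∫ a, ∫ b, G (a - b) * (v a - v b) ^ 2 ∂(tμ n) ∂(tμ n) with hT
  set wt : (Fin n → ℤ) → ℝ := fun k => (1 + ∑ i, (k i : ℝ) ^ 2)⁻¹ with hwt
  have hwt0 : ∀ k, 0 ≤ wt k := fun k => by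
    have : 0 ≤ ∑ i, (k i : ℝ) ^ 2 := Finset.sum_nonneg fun i _ => sq_nonneg _
    simp only [hwt]; positivity
  have hwt1 : ∀ k, wt k ≤ 1 := fun k => by
    have : 0 ≤ ∑ i, (k i : ℝ) ^ 2 := Finset.sum_nonneg fun i _ => sq_nonneg _
    exact inv_le_one_of_one_le₀ (by linarith)
  have ha0 : ∀ k, 0 ≤ a k := fun k => by positivity
  have hsw : Summable fun k => wt k * a k :=
    Summable.of_nonneg_of_le (fun k => mul_nonneg (hwt0 k) (ha0 k))
      (fun k => mul_le_of_le_one_left (ha0 k) (hwt1 k)) hsum.summable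
  have hH' : ∑' k : Fin n → ℤ, (1 + ∑ i, (k i : ℝ) ^ 2)⁻¹ * ‖fcoef u k‖ ^ 2 =
      P ^ 2 * ∑' k, wt k * a k := by
    rw [← tsum_mul_left]
    exact tsum_congr fun k => by rw [hH, hwt]; ring
  have hS0 : 0 ≤ ∑' k, wt k * a k := tsum_nonneg fun k => mul_nonneg (hwt0 k) (ha0 k)
  have hT0 : 0 ≤ T := integral_nonneg fun a => integral_nonneg fun b =>
    mul_nonneg (hG0 _) (sq_nonneg _)
  -- The multiplier bound is summed over finite sets of frequencies, which bounds the full sum.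
  have main : ∫ t, v t ^ 2 ∂(tμ n) ≤
      A / R ^ 2 * (P / 2 * T) + 2 * R ^ 2 * ∑' k, wt k * a k := by
    refine hasSum_le_of_sum_le hsum fun S => ?_
    have h1 := energy_lower hv hG hG0 S
    simp only [hG_def, symb_scaled hJ1supp hη hη1 hJt] at h1
    have h2 : ∑ k ∈ S, ((η ^ 2)⁻¹ * symb J1 fun i => η * k i) * a k ≤ P / 2 * T := by
      have := mul_le_mul_of_nonneg_left h1 (by positivity : 0 ≤ P / 2)
      refine le_trans (le_of_eq ?_) this
      rw [Finset.mul_sum]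
      refine Finset.sum_congr rfl fun k _ => ?_
      have : P ≠ 0 := by positivity
      simp only [← hP_def, ha_def]
      field_simp
    have h3 : ∑ k ∈ S, wt k * a k ≤ ∑' k, wt k * a k :=
      hsw.sum_le_tsum S fun k _ => mul_nonneg (hwt0 k) (ha0 k)
    calc ∑ k ∈ S, a k
        ≤ ∑ k ∈ S, (A / R ^ 2 * (((η ^ 2)⁻¹ * symb J1 fun i => η * k i) * a k) +
            2 * R ^ 2 * (wt k * a k)) := Finset.sum_le_sum fun k _ => by
          have := mul_le_mul_of_nonneg_right (hmult R η hR hη hηR k) (ha0 k)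
          simp only [hwt]
          linarith
      _ = A / R ^ 2 * ∑ k ∈ S, ((η ^ 2)⁻¹ * symb J1 fun i => η * k i) * a k +
            2 * R ^ 2 * ∑ k ∈ S, wt k * a k := by
          rw [Finset.sum_add_distrib, Finset.mul_sum, Finset.mul_sum]
      _ ≤ _ := by gcongr
  rw [hL2, hEn, hH']
  calc P * ∫ t, v t ^ 2 ∂(tμ n)
      ≤ P * (A / R ^ 2 * (P / 2 * T) + 2 * R ^ 2 * ∑' k, wt k * a k) := by gcongr
    _ = 2 * A / R ^ 2 * (1 / 4 * (P * (P * T))) +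
          2 * R ^ 2 * (P * ∑' k, wt k * a k) := by ring
    _ ≤ (2 * A + 2) / R ^ 2 * (1 / 4 * (P * (P * T))) +
          (2 * A + 2) * R ^ 2 * (P ^ 2 * ∑' k, wt k * a k) := by
        gcongr
        · linarith
        · linarith
        · nlinarith
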